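/- The following three statements are equivalent: (i) Σ_K is mean square stable; (ii) Σ̄_K is mean square stable; (iii) there exist symmetric positive definite matrices Q_χ ∈ ℝ^{n×n} for every χ ∈ 𝔛 such that Q_χ − D̄_χ(A_K Q A_Kᵀ) is positive definite for every χ ∈ 𝔛, where (A_K Q A_Kᵀ)_χ = A_{K,χ} Q_χ A_{K,χ}ᵀ. -/

import Mathlib

open MeasureTheory ProbabilityTheory Matrix

noncomputable section

/-- The state space `[N] × [M] × [N] × [T]` of the extended process `r̄`.
`Fin N`, `Fin M`, `Fin T` play the roles of `[N] = {1,…,N}`, `[M]`, `[T]`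
(with `Fin T` being the 0-indexed version of `[T] = {1,…,T}`, i.e. `δ ∈ [T]`
corresponds to `δ - 1 : Fin T`). -/
abbrev XT (NN MM T : ℕ) : Type := Fin NN × Fin MM × Fin NN × Fin T

/-- `X` is a time-homogeneous Markov chain with transition probability matrix `P`:
for every `k`, every state `j` and every sequence of states `i`,
`Pr(X(k+1) = j ∧ X(l) = i l for all l ≤ k) = P (i k) j * Pr(X(l) = i l for all l ≤ k)`. -/
def IsMarkovChain {Ω : Type} {_mΩ : MeasurableSpace Ω} (μ : Measure Ω) {S : Type}
    (X : ℕ → Ω → S) (P : S → S → ℝ) : Prop :=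
  ∀ (k : ℕ) (j : S) (i : ℕ → S),
    (μ {ω | X (k + 1) ω = j ∧ ∀ l ≤ k, X l ω = i l}).toReal
      = P (i k) j * (μ {ω | ∀ l ≤ k, X l ω = i l}).toReal

/-- `⌊m⌋_T`, the unique element of `{0,…,T-1}` congruent to `m` modulo `T`, as `Fin T`. -/
def intToFin (T : ℕ) [NeZero T] (a : ℤ) : Fin T :=
  ⟨(a % (T : ℤ)).toNat, by
    have hT : 0 < (T : ℤ) := by
      exact_mod_cast Nat.pos_of_ne_zero (NeZero.ne T)
    have h1 : 0 ≤ a % (T : ℤ) := Int.emod_nonneg a (by omega)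
    have h2 : a % (T : ℤ) < (T : ℤ) := Int.emod_lt_of_pos a hT
    omega⟩

-- `τ(k)`: the most recent observation time `≤ k` (i.e. the largest `j ≤ k` with
-- `f(s(j)) = 1`), or `τ₀` if no observation has occurred up to time `k` (`k < t₀`).
open Classical in
def tauZ {Ω : Type} {MM : ℕ} (s : ℕ → Ω → Fin MM) (f : Fin MM → Bool)
    (τ₀ : ℤ) (k : ℕ) (ω : Ω) : ℤ :=
  if ∃ j ≤ k, f (s j ω) = true
  then ((Nat.findGreatest (fun j => f (s j ω) = true) k : ℕ) : ℤ)
  else τ₀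

-- `σ(k) = r(τ(k))` if an observation occurred by time `k` (i.e. `k ≥ t₀`), else `σ₀`.
open Classical in
def sigmaProc {Ω : Type} {NN MM : ℕ} (r : ℕ → Ω → Fin NN) (s : ℕ → Ω → Fin MM)
    (f : Fin MM → Bool) (σ₀ : Fin NN) (k : ℕ) (ω : Ω) : Fin NN :=
  if ∃ j ≤ k, f (s j ω) = true
  then r (Nat.findGreatest (fun j => f (s j ω) = true) k) ω
  else σ₀

/-- `ρ(k) = ⌊k - τ(k)⌋_T + 1 ∈ [T]`, represented 0-indexed as `⌊k - τ(k)⌋_T : Fin T`. -/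
def rhoProc {Ω : Type} {MM T : ℕ} [NeZero T] (s : ℕ → Ω → Fin MM) (f : Fin MM → Bool)
    (τ₀ : ℤ) (k : ℕ) (ω : Ω) : Fin T :=
  intToFin T ((k : ℤ) - tauZ s f τ₀ k ω)

/-- The extended process `r̄(k) = (r(k), s(k), σ(k), ρ(k))`. -/
def rbarProc {Ω : Type} {NN MM T : ℕ} [NeZero T] (r : ℕ → Ω → Fin NN)
    (s : ℕ → Ω → Fin MM) (f : Fin MM → Bool) (τ₀ : ℤ) (σ₀ : Fin NN)
    (k : ℕ) (ω : Ω) : XT NN MM T :=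
  (r k ω, s k ω, sigmaProc r s f σ₀ k ω, rhoProc s f τ₀ k ω)

/-- Membership in `𝔛`: if `f(β) = 1` then `α = γ` and `δ = 1` (0-indexed: `δ = 0`). -/
def inX {NN MM T : ℕ} [NeZero T] (f : Fin MM → Bool) (χ : XT NN MM T) : Prop :=
  f χ.2.1 = true → χ.1 = χ.2.2.1 ∧ χ.2.2.2 = 0

/-- The transition probabilities `p̄_{χχ'}` of the extended chain. The condition
`⌊δ' - δ - 1⌋_T = 0` for `δ, δ' ∈ [T]` is, in 0-indexed form, `δ' = δ + 1` in `Fin T`. -/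
def pbar {NN MM T : ℕ} [NeZero T] (P : Matrix (Fin NN) (Fin NN) ℝ)
    (Q : Matrix (Fin MM) (Fin MM) ℝ) (f : Fin MM → Bool) (χ χ' : XT NN MM T) : ℝ :=
  (if f χ'.2.1 = true
    then (if χ'.1 = χ'.2.2.1 ∧ χ'.2.2.2 = 0 then (1 : ℝ) else 0)
    else (if χ'.2.2.1 = χ.2.2.1 ∧ χ'.2.2.2 = χ.2.2.2 + 1 then (1 : ℝ) else 0))
  * P χ.1 χ'.1 * Q χ.2.1 χ'.2.1

/-- The state trajectory of the closed-loop system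
`x(k+1) = A(mode(k)) x(k) + E(mode(k)) w(k)`, `x(0) = x₀`. -/
def traj {Ω S : Type} {n q : ℕ}
    (Amat : S → Matrix (Fin n) (Fin n) ℝ) (Emat : S → Matrix (Fin n) (Fin q) ℝ)
    (mode : ℕ → Ω → S) (w : ℕ → Ω → Fin q → ℝ) (x0 : Fin n → ℝ) : ℕ → Ω → Fin n → ℝ
  | 0, _ => x0
  | (k + 1), ω =>
      (Amat (mode k ω)).mulVec (traj Amat Emat mode w x0 k ω)
        + (Emat (mode k ω)).mulVec (w k ω)

/-- `A_{K,χ} = A_α + B_α K_{γ,δ}`. -/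
def AKmat {NN MM T n m : ℕ} (A : Fin NN → Matrix (Fin n) (Fin n) ℝ)
    (B : Fin NN → Matrix (Fin n) (Fin m) ℝ)
    (K : Fin NN → Fin T → Matrix (Fin m) (Fin n) ℝ) (χ : XT NN MM T) :
    Matrix (Fin n) (Fin n) ℝ :=
  A χ.1 + B χ.1 * K χ.2.2.1 χ.2.2.2

/-- `C_{K,χ} = C_α + D_α K_{γ,δ}`. -/
def CKmat {NN MM T n m ℓ : ℕ} (C : Fin NN → Matrix (Fin ℓ) (Fin n) ℝ)
    (D : Fin NN → Matrix (Fin ℓ) (Fin m) ℝ)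
    (K : Fin NN → Fin T → Matrix (Fin m) (Fin n) ℝ) (χ : XT NN MM T) :
    Matrix (Fin ℓ) (Fin n) ℝ :=
  C χ.1 + D χ.1 * K χ.2.2.1 χ.2.2.2

/-- Squared Euclidean norm of a vector, as an extended nonnegative real. -/
def sqE {d : ℕ} (v : Fin d → ℝ) : ENNReal := ENNReal.ofReal (∑ i, (v i) ^ 2)

-- The operator `D̄_χ(R) = ∑_{χ' ∈ 𝔛} p̄_{χ'χ} R_{χ'}`.
open Classical in
def Dop {NN MM T n : ℕ} [NeZero T] (P : Matrix (Fin NN) (Fin NN) ℝ)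
    (Q : Matrix (Fin MM) (Fin MM) ℝ) (f : Fin MM → Bool)
    (R : XT NN MM T → Matrix (Fin n) (Fin n) ℝ) (χ : XT NN MM T) :
    Matrix (Fin n) (Fin n) ℝ :=
  ∑ χ' : XT NN MM T, if inX f χ' then pbar P Q f χ' χ • R χ' else 0

-- The operator `F̄_χ(Z) = ∑_{χ' ∈ 𝔛} p̄_{χχ'} Z_{χ,χ'}`.
open Classical in
def Fop {NN MM T n : ℕ} [NeZero T] (P : Matrix (Fin NN) (Fin NN) ℝ)
    (Q : Matrix (Fin MM) (Fin MM) ℝ) (f : Fin MM → Bool)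
    (Z : XT NN MM T → XT NN MM T → Matrix (Fin n) (Fin n) ℝ) (χ : XT NN MM T) :
    Matrix (Fin n) (Fin n) ℝ :=
  ∑ χ' : XT NN MM T, if inX f χ' then pbar P Q f χ χ' • Z χ χ' else 0

/-- A pair `(γ,δ) ∈ [N] × [T]` is admissible if `(α,β,γ,δ) ∈ 𝔛` for some `α, β`. -/
def Admissible {NN MM T : ℕ} [NeZero T] (f : Fin MM → Bool) (g : Fin NN) (d : Fin T) : Prop :=
  ∃ (α : Fin NN) (β : Fin MM), inX (T := T) f (α, β, g, d)

/-- A realization, on some probability space, of the pair of independent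
time-homogeneous Markov chains `(r, s)` with transition matrices `P` and `Q`. -/
structure MJLSReal (NN MM : ℕ) (P : Matrix (Fin NN) (Fin NN) ℝ)
    (Q : Matrix (Fin MM) (Fin MM) ℝ) : Type 1 where
  Ω : Type
  inst : MeasurableSpace Ω
  μ : @Measure Ω inst
  prob : IsProbabilityMeasure μ
  r : ℕ → Ω → Fin NN
  s : ℕ → Ω → Fin MM
  meas_r : ∀ k, Measurable[inst] (r k)
  meas_s : ∀ k, Measurable[inst] (s k)
  markov_r : IsMarkovChain μ r fun i j => P i j
  markov_s : IsMarkovChain μ s fun i j => Q i j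
  indep : IndepFun (fun ω l => r l ω) (fun ω l => s l ω) μ

/-- A realization, on some probability space, of a time-homogeneous Markov chain `θ`
taking values in `𝔛` with transition probabilities `p̄`. -/
structure ThetaReal (NN MM T : ℕ) [NeZero T] (P : Matrix (Fin NN) (Fin NN) ℝ)
    (Q : Matrix (Fin MM) (Fin MM) ℝ) (f : Fin MM → Bool) : Type 1 where
  Ω : Type
  inst : MeasurableSpace Ω
  μ : @Measure Ω inst
  prob : IsProbabilityMeasure μ
  θ : ℕ → Ω → XT NN MM T
  meas : ∀ k, Measurable[inst] (θ k)
  mem : ∀ k ω, inX f (θ k ω)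
  markov : IsMarkovChain μ θ (pbar P Q f)

/-- Mean square stability of the closed-loop system `Σ_K`: there are `c > 0` and
`λ ∈ [0,1)` such that for every realization, every deterministic initialization
(`r(0) = r₀`, `s(0) = s₀` a.s., together with `σ₀` and `τ₀ ≤ 0`, so that `r̄(0)`
is a deterministic element of `𝔛`), every `x₀` and every `k`,
`E[‖x(k)‖²] ≤ c λ^k ‖x₀‖²` (with `w ≡ 0`). -/
def MeanSquareStable {NN MM T n m q : ℕ} [NeZero T]
    (P : Matrix (Fin NN) (Fin NN) ℝ) (Qm : Matrix (Fin MM) (Fin MM) ℝ) (f : Fin MM → Bool)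
    (A : Fin NN → Matrix (Fin n) (Fin n) ℝ) (B : Fin NN → Matrix (Fin n) (Fin m) ℝ)
    (E : Fin NN → Matrix (Fin n) (Fin q) ℝ)
    (K : Fin NN → Fin T → Matrix (Fin m) (Fin n) ℝ) : Prop :=
  ∃ c : ℝ, 0 < c ∧ ∃ lam : ℝ, 0 ≤ lam ∧ lam < 1 ∧
    ∀ (S : MJLSReal NN MM P Qm) (τ₀ : ℤ), τ₀ ≤ 0 →
      ∀ (σ₀ r₀ : Fin NN) (s₀ : Fin MM),
        (∀ᵐ ω ∂S.μ, S.r 0 ω = r₀ ∧ S.s 0 ω = s₀) →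
        ∀ (x0 : Fin n → ℝ) (k : ℕ),
          (∫⁻ ω, sqE (traj (AKmat A B K) (fun χ => E χ.1)
              (rbarProc S.r S.s f τ₀ σ₀) (fun _ _ => 0) x0 k ω) ∂S.μ)
            ≤ ENNReal.ofReal (c * lam ^ k * ∑ i, (x0 i) ^ 2)

/-- Mean square stability of `Σ̄_K` (the system driven by the chain `θ`). -/
def MeanSquareStableBar {NN MM T n m q : ℕ} [NeZero T]
    (P : Matrix (Fin NN) (Fin NN) ℝ) (Qm : Matrix (Fin MM) (Fin MM) ℝ) (f : Fin MM → Bool)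
    (A : Fin NN → Matrix (Fin n) (Fin n) ℝ) (B : Fin NN → Matrix (Fin n) (Fin m) ℝ)
    (E : Fin NN → Matrix (Fin n) (Fin q) ℝ)
    (K : Fin NN → Fin T → Matrix (Fin m) (Fin n) ℝ) : Prop :=
  ∃ c : ℝ, 0 < c ∧ ∃ lam : ℝ, 0 ≤ lam ∧ lam < 1 ∧
    ∀ (S : ThetaReal NN MM T P Qm f) (χ : XT NN MM T), inX f χ →
      (∀ᵐ ω ∂S.μ, S.θ 0 ω = χ) →
      ∀ (x0 : Fin n → ℝ) (k : ℕ),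
        (∫⁻ ω, sqE (traj (AKmat A B K) (fun χ' => E χ'.1) S.θ (fun _ _ => 0) x0 k ω) ∂S.μ)
          ≤ ENNReal.ofReal (c * lam ^ k * ∑ i, (x0 i) ^ 2)

/-- The impulse disturbance `w = e_i φ`, i.e. `w(0) = e_i` and `w(k) = 0` for `k ≥ 1`. -/
def impulse {Ω : Type} (q : ℕ) (i : Fin q) : ℕ → Ω → Fin q → ℝ :=
  fun k _ j => if k = 0 ∧ j = i then 1 else 0

/-- `∑_k E[‖z(k; 0, χ, e_i φ)‖²]` for `Σ_K` on a given realization with data `(τ₀, σ₀)`. -/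
def H2TermSigma {NN MM T n m q ℓ : ℕ} [NeZero T]
    {P : Matrix (Fin NN) (Fin NN) ℝ} {Qm : Matrix (Fin MM) (Fin MM) ℝ}
    (S : MJLSReal NN MM P Qm) (f : Fin MM → Bool) (τ₀ : ℤ) (σ₀ : Fin NN)
    (A : Fin NN → Matrix (Fin n) (Fin n) ℝ) (B : Fin NN → Matrix (Fin n) (Fin m) ℝ)
    (C : Fin NN → Matrix (Fin ℓ) (Fin n) ℝ) (D : Fin NN → Matrix (Fin ℓ) (Fin m) ℝ)
    (E : Fin NN → Matrix (Fin n) (Fin q) ℝ)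
    (K : Fin NN → Fin T → Matrix (Fin m) (Fin n) ℝ) (i : Fin q) : ENNReal :=
  ∑' k : ℕ, ∫⁻ ω, sqE ((CKmat C D K (rbarProc S.r S.s f τ₀ σ₀ k ω)).mulVec
      (traj (AKmat A B K) (fun χ => E χ.1) (rbarProc S.r S.s f τ₀ σ₀)
        (impulse q i) 0 k ω)) ∂S.μ

-- `‖Σ_K‖₂² < γ`, where `‖Σ_K‖₂² = ∑_{i=1}^q ∑_{χ ∈ 𝔛} μ̄(χ) ‖z(⬝;0,χ,e_iφ)‖₂²` and the
-- expectations are over arbitrary realizations with deterministic initialization `r̄(0) = χ`.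
open Classical in
def H2SqLtSigma {NN MM T n m q ℓ : ℕ} [NeZero T]
    (P : Matrix (Fin NN) (Fin NN) ℝ) (Qm : Matrix (Fin MM) (Fin MM) ℝ) (f : Fin MM → Bool)
    (A : Fin NN → Matrix (Fin n) (Fin n) ℝ) (B : Fin NN → Matrix (Fin n) (Fin m) ℝ)
    (C : Fin NN → Matrix (Fin ℓ) (Fin n) ℝ) (D : Fin NN → Matrix (Fin ℓ) (Fin m) ℝ)
    (E : Fin NN → Matrix (Fin n) (Fin q) ℝ)
    (K : Fin NN → Fin T → Matrix (Fin m) (Fin n) ℝ)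
    (μbar : XT NN MM T → ℝ) (γ : ℝ) : Prop :=
  ∀ (S : Fin q → XT NN MM T → MJLSReal NN MM P Qm)
    (τ : Fin q → XT NN MM T → ℤ) (σv : Fin q → XT NN MM T → Fin NN),
    (∀ i χ, inX f χ → τ i χ ≤ 0 ∧
        (∀ᵐ ω ∂(S i χ).μ, rbarProc (S i χ).r (S i χ).s f (τ i χ) (σv i χ) 0 ω = χ)) →
    (∑ i : Fin q, ∑ χ : XT NN MM T,
        if inX f χ
        then ENNReal.ofReal (μbar χ) * H2TermSigma (S i χ) f (τ i χ) (σv i χ) A B C D E K i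
        else 0)
      < ENNReal.ofReal γ

/-- `∑_k E[‖z̄(k; 0, χ, e_i φ)‖²]` for `Σ̄_K` on a given realization of `θ`. -/
def H2TermBar {NN MM T n m q ℓ : ℕ} [NeZero T]
    {P : Matrix (Fin NN) (Fin NN) ℝ} {Qm : Matrix (Fin MM) (Fin MM) ℝ} {f : Fin MM → Bool}
    (S : ThetaReal NN MM T P Qm f)
    (A : Fin NN → Matrix (Fin n) (Fin n) ℝ) (B : Fin NN → Matrix (Fin n) (Fin m) ℝ)
    (C : Fin NN → Matrix (Fin ℓ) (Fin n) ℝ) (D : Fin NN → Matrix (Fin ℓ) (Fin m) ℝ)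
    (E : Fin NN → Matrix (Fin n) (Fin q) ℝ)
    (K : Fin NN → Fin T → Matrix (Fin m) (Fin n) ℝ) (i : Fin q) : ENNReal :=
  ∑' k : ℕ, ∫⁻ ω, sqE ((CKmat C D K (S.θ k ω)).mulVec
      (traj (AKmat A B K) (fun χ => E χ.1) S.θ (impulse q i) 0 k ω)) ∂S.μ

-- `‖Σ̄_K‖₂² < γ` (the `H₂` norm of `Σ̄_K`, defined with `θ` in place of `r̄`).
open Classical in
def H2SqLtBar {NN MM T n m q ℓ : ℕ} [NeZero T]
    (P : Matrix (Fin NN) (Fin NN) ℝ) (Qm : Matrix (Fin MM) (Fin MM) ℝ) (f : Fin MM → Bool)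
    (A : Fin NN → Matrix (Fin n) (Fin n) ℝ) (B : Fin NN → Matrix (Fin n) (Fin m) ℝ)
    (C : Fin NN → Matrix (Fin ℓ) (Fin n) ℝ) (D : Fin NN → Matrix (Fin ℓ) (Fin m) ℝ)
    (E : Fin NN → Matrix (Fin n) (Fin q) ℝ)
    (K : Fin NN → Fin T → Matrix (Fin m) (Fin n) ℝ)
    (μbar : XT NN MM T → ℝ) (γ : ℝ) : Prop :=
  ∀ (S : Fin q → XT NN MM T → ThetaReal NN MM T P Qm f),
    (∀ i χ, inX f χ → (∀ᵐ ω ∂(S i χ).μ, (S i χ).θ 0 ω = χ)) →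
    (∑ i : Fin q, ∑ χ : XT NN MM T,
        if inX f χ
        then ENNReal.ofReal (μbar χ) * H2TermBar (S i χ) A B C D E K i
        else 0)
      < ENNReal.ofReal γ

/-- The σ-algebra `Θ_k` generated by `r(0), s(0), …, r(k), s(k)`, for a realization. -/
def sigFiltSigma {NN MM : ℕ} {P : Matrix (Fin NN) (Fin NN) ℝ}
    {Q : Matrix (Fin MM) (Fin MM) ℝ} (S : MJLSReal NN MM P Q) (k : ℕ) :
    MeasurableSpace S.Ω :=
  ⨆ j ∈ Finset.range (k + 1),
    (MeasurableSpace.comap (S.r j) inferInstance ⊔ MeasurableSpace.comap (S.s j) inferInstance)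

/-- The σ-algebra generated by `θ(0), …, θ(k)`, for a realization of `θ`. -/
def sigFiltBar {NN MM T : ℕ} [NeZero T] {P : Matrix (Fin NN) (Fin NN) ℝ}
    {Q : Matrix (Fin MM) (Fin MM) ℝ} {f : Fin MM → Bool} (S : ThetaReal NN MM T P Q f)
    (k : ℕ) : MeasurableSpace S.Ω :=
  ⨆ j ∈ Finset.range (k + 1), MeasurableSpace.comap (S.θ j) inferInstance

/-- `Σ_K` satisfies `‖Σ_K‖∞² < γ`: there is `0 ≤ c < γ` such that `‖z‖₂² ≤ c ‖w‖₂²`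
for every realization, every deterministic initialization `r̄(0) = r̄₀ ∈ 𝔛`, and
every nonzero `w ∈ ℓ²(ℝ^q)` adapted to `(Θ_k)_k` (with `x₀ = 0`). -/
def HinfSqLtSigma {NN MM T n m q ℓ : ℕ} [NeZero T]
    (P : Matrix (Fin NN) (Fin NN) ℝ) (Qm : Matrix (Fin MM) (Fin MM) ℝ) (f : Fin MM → Bool)
    (A : Fin NN → Matrix (Fin n) (Fin n) ℝ) (B : Fin NN → Matrix (Fin n) (Fin m) ℝ)
    (C : Fin NN → Matrix (Fin ℓ) (Fin n) ℝ) (D : Fin NN → Matrix (Fin ℓ) (Fin m) ℝ)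
    (E : Fin NN → Matrix (Fin n) (Fin q) ℝ)
    (K : Fin NN → Fin T → Matrix (Fin m) (Fin n) ℝ) (γ : ℝ) : Prop :=
  ∃ c : ℝ, 0 ≤ c ∧ c < γ ∧
    ∀ (S : MJLSReal NN MM P Qm) (τ₀ : ℤ), τ₀ ≤ 0 → ∀ (σ₀ : Fin NN) (χ : XT NN MM T),
      inX f χ → (∀ᵐ ω ∂S.μ, rbarProc S.r S.s f τ₀ σ₀ 0 ω = χ) →
      ∀ (w : ℕ → S.Ω → Fin q → ℝ),
        (∀ k, Measurable[sigFiltSigma S k] (w k)) →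
        0 < (∑' k : ℕ, ∫⁻ ω, sqE (w k ω) ∂S.μ) →
        (∑' k : ℕ, ∫⁻ ω, sqE (w k ω) ∂S.μ) ≠ ⊤ →
        (∑' k : ℕ, ∫⁻ ω, sqE ((CKmat C D K (rbarProc S.r S.s f τ₀ σ₀ k ω)).mulVec
            (traj (AKmat A B K) (fun χ' => E χ'.1) (rbarProc S.r S.s f τ₀ σ₀) w 0 k ω)) ∂S.μ)
          ≤ ENNReal.ofReal c * (∑' k : ℕ, ∫⁻ ω, sqE (w k ω) ∂S.μ)

/-- `Σ̄_K` satisfies `‖Σ̄_K‖∞² < γ` (disturbances adapted to the filtration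
generated by `θ`). -/
def HinfSqLtBar {NN MM T n m q ℓ : ℕ} [NeZero T]
    (P : Matrix (Fin NN) (Fin NN) ℝ) (Qm : Matrix (Fin MM) (Fin MM) ℝ) (f : Fin MM → Bool)
    (A : Fin NN → Matrix (Fin n) (Fin n) ℝ) (B : Fin NN → Matrix (Fin n) (Fin m) ℝ)
    (C : Fin NN → Matrix (Fin ℓ) (Fin n) ℝ) (D : Fin NN → Matrix (Fin ℓ) (Fin m) ℝ)
    (E : Fin NN → Matrix (Fin n) (Fin q) ℝ)
    (K : Fin NN → Fin T → Matrix (Fin m) (Fin n) ℝ) (γ : ℝ) : Prop :=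
  ∃ c : ℝ, 0 ≤ c ∧ c < γ ∧
    ∀ (S : ThetaReal NN MM T P Qm f) (χ : XT NN MM T),
      inX f χ → (∀ᵐ ω ∂S.μ, S.θ 0 ω = χ) →
      ∀ (w : ℕ → S.Ω → Fin q → ℝ),
        (∀ k, Measurable[sigFiltBar S k] (w k)) →
        0 < (∑' k : ℕ, ∫⁻ ω, sqE (w k ω) ∂S.μ) →
        (∑' k : ℕ, ∫⁻ ω, sqE (w k ω) ∂S.μ) ≠ ⊤ →
        (∑' k : ℕ, ∫⁻ ω, sqE ((CKmat C D K (S.θ k ω)).mulVec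
            (traj (AKmat A B K) (fun χ' => E χ'.1) S.θ w 0 k ω)) ∂S.μ)
          ≤ ENNReal.ofReal c * (∑' k : ℕ, ∫⁻ ω, sqE (w k ω) ∂S.μ)

/-- The symmetric 4×4 block matrix appearing in the `H∞` LMI, with diagonal blocks
`D1, γ I_q, D3, I_ℓ`, sub-diagonal blocks `(3,1) = B31`, `(3,2) = B32`, `(4,1) = B41`,
the corresponding transposed blocks above the diagonal, and zeros elsewhere. -/
def hinfBlock {n q ℓ : ℕ} (γ : ℝ) (D1 D3 : Matrix (Fin n) (Fin n) ℝ)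
    (B31 : Matrix (Fin n) (Fin n) ℝ) (B32 : Matrix (Fin n) (Fin q) ℝ)
    (B41 : Matrix (Fin ℓ) (Fin n) ℝ) :
    Matrix ((Fin n ⊕ Fin q) ⊕ (Fin n ⊕ Fin ℓ)) ((Fin n ⊕ Fin q) ⊕ (Fin n ⊕ Fin ℓ)) ℝ :=
  Matrix.fromBlocks
    (Matrix.fromBlocks D1 0 0 (γ • (1 : Matrix (Fin q) (Fin q) ℝ)))
    (Matrix.fromBlocks B31ᵀ B41ᵀ B32ᵀ 0)
    (Matrix.fromBlocks B31 B32 B41 0)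
    (Matrix.fromBlocks D3 0 0 (1 : Matrix (Fin ℓ) (Fin ℓ) ℝ))

/-! ### Existence of Markov chains -/

def chainProc {N : ℕ} (r0 : Fin N) : ℕ → (ℕ × Fin N → Fin N) → Fin N
  | 0, _ => r0
  | (k + 1), ω => ω (k, chainProc r0 k ω)

lemma chainProc_measurable {N : ℕ} (r0 : Fin N) (k : ℕ) : Measurable (chainProc r0 k) := by
  induction k with
  | zero => exact measurable_const
  | succ k ih =>
    refine measurable_to_countable' fun j => ?_
    have : chainProc r0 (k + 1) ⁻¹' {j}
        = ⋃ i : Fin N, (chainProc r0 k ⁻¹' {i} ∩ (fun ω => ω (k, i)) ⁻¹' {j}) := by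
      ext ω
      simp [chainProc]
    rw [this]
    refine MeasurableSet.iUnion fun i => (ih (measurableSet_singleton i)).inter ?_
    exact (measurable_pi_apply (k, i)) (measurableSet_singleton j)

lemma exists_chain {N : ℕ} (P : Matrix (Fin N) (Fin N) ℝ)
    (hP0 : ∀ i j, 0 ≤ P i j) (hP1 : ∀ i, ∑ j, P i j = 1) (r0 : Fin N) :
    ∃ μ : Measure (ℕ × Fin N → Fin N), IsProbabilityMeasure μ ∧
      IsMarkovChain μ (chainProc r0) (fun i j => P i j) := by
  classical
  have hsum : ∀ i, ∑ j, ENNReal.ofReal (P i j) = 1 := fun i => by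
    rw [← ENNReal.ofReal_sum_of_nonneg (fun j _ => hP0 i j), hP1, ENNReal.ofReal_one]
  let ν : ℕ × Fin N → Measure (Fin N) := fun x => (PMF.ofFintype _ (hsum x.2)).toMeasure
  have : ∀ x, IsProbabilityMeasure (ν x) := fun x => by
    simp only [ν]; infer_instance
  have hν : ∀ x j, ν x {j} = ENNReal.ofReal (P x.2 j) := fun x j => by
    simp only [ν]
    rw [PMF.toMeasure_apply_singleton _ _ (measurableSet_singleton _)]
    rfl
  refine ⟨Measure.infinitePi ν, inferInstance, ?_⟩
  have key : ∀ (k : ℕ) (i : ℕ → Fin N), i 0 = r0 →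
      (Measure.infinitePi ν {ω | ∀ l ≤ k, chainProc r0 l ω = i l}).toReal
        = ∏ l ∈ Finset.range k, P (i l) (i (l + 1)) := by
    intro k i h0
    have hset : {ω | ∀ l ≤ k, chainProc r0 l ω = i l}
        = Set.pi (((Finset.range k).image (fun l => (l, i l)) : Finset (ℕ × Fin N)) :
            Set (ℕ × Fin N)) (fun x => {i (x.1 + 1)}) := by
      ext ω
      simp only [Set.mem_ofPred_eq, Set.mem_pi, Finset.mem_coe, Finset.mem_image,
        Finset.mem_range, Set.mem_singleton_iff]
      constructor
      · rintro h x ⟨l, hl, rfl⟩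
        have h1 := h (l + 1) (by omega)
        have h2 := h l (by omega)
        simp only [chainProc, h2] at h1
        exact h1
      · intro h l
        induction l with
        | zero => intro _; simp [chainProc, h0]
        | succ l ih =>
          intro hl
          simp only [chainProc]
          rw [ih (by omega)]
          exact h (l, i l) ⟨l, by omega, rfl⟩
    rw [hset, Measure.infinitePi_pi _ (fun _ _ => measurableSet_singleton _),
      Finset.prod_image (by intro a _ b _ h; exact (Prod.mk.inj h).1), ENNReal.toReal_prod]
    refine Finset.prod_congr rfl fun l _ => ?_
    rw [hν, ENNReal.toReal_ofReal (hP0 _ _)]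
  intro k j i
  by_cases h0 : i 0 = r0
  · rw [key k i h0]
    have := key (k + 1) (Function.update i (k + 1) j) (by simp [h0])
    rw [Finset.prod_range_succ] at this
    have hs : {ω | chainProc r0 (k + 1) ω = j ∧ ∀ l ≤ k, chainProc r0 l ω = i l}
        = {ω | ∀ l ≤ k + 1, chainProc r0 l ω = Function.update i (k + 1) j l} := by
      ext ω
      simp only [Set.mem_ofPred_eq]
      constructor
      · rintro ⟨h1, h2⟩ l hl
        rcases Nat.lt_or_ge k l with h | h
        · obtain rfl : l = k + 1 := by omega
          simpa using h1
        · rw [Function.update_of_ne (by omega)]; exact h2 l h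
      · intro h
        refine ⟨by simpa using h (k + 1) le_rfl, fun l hl => ?_⟩
        have := h l (by omega)
        rwa [Function.update_of_ne (by omega)] at this
    rw [hs, this, mul_comm]
    congr 1
    · simp
    · refine Finset.prod_congr rfl fun l hl => ?_
      rw [Finset.mem_range] at hl
      rw [Function.update_of_ne (by omega), Function.update_of_ne (by omega)]
  · have e1 : {ω | chainProc r0 (k + 1) ω = j ∧ ∀ l ≤ k, chainProc r0 l ω = i l} = ∅ := by
      ext ω
      simp only [Set.mem_ofPred_eq, Set.mem_empty_iff_false, iff_false, not_and]
      intro _ h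
      exact h0 (h 0 (Nat.zero_le _)).symm
    have e2 : {ω | ∀ l ≤ k, chainProc r0 l ω = i l} = ∅ := by
      ext ω
      simp only [Set.mem_ofPred_eq, Set.mem_empty_iff_false, iff_false]
      intro h
      exact h0 (h 0 (Nat.zero_le _)).symm
    rw [e1, e2]; simp

lemma IsMarkovChain.comp_mp {Ω Ω' : Type} [MeasurableSpace Ω] [MeasurableSpace Ω']
    {μ : Measure Ω} {ν : Measure Ω'} {N : ℕ} {X : ℕ → Ω → Fin N} {P : Fin N → Fin N → ℝ}
    (hm : ∀ k, Measurable (X k))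
    (h : IsMarkovChain μ X P) {g : Ω' → Ω} (hg : MeasurePreserving g ν μ) :
    IsMarkovChain ν (fun k ω => X k (g ω)) P := by
  intro k j i
  have m2 : MeasurableSet {ω | ∀ l ≤ k, X l ω = i l} := by
    have : {ω | ∀ l ≤ k, X l ω = i l} = ⋂ l, ⋂ (_ : l ≤ k), X l ⁻¹' {i l} := by ext; simp
    rw [this]
    exact MeasurableSet.iInter fun l => MeasurableSet.iInter fun _ =>
      hm l (measurableSet_singleton _)
  have m1 : MeasurableSet {ω | X (k + 1) ω = j ∧ ∀ l ≤ k, X l ω = i l} :=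
    (hm (k + 1) (measurableSet_singleton j)).inter m2
  have := h k j i
  rw [← hg.measure_preimage m1.nullMeasurableSet, ← hg.measure_preimage m2.nullMeasurableSet]
    at this
  exact this

lemma exists_real {NN MM : ℕ} (P : Matrix (Fin NN) (Fin NN) ℝ) (Qm : Matrix (Fin MM) (Fin MM) ℝ)
    (hP0 : ∀ i j, 0 ≤ P i j) (hP1 : ∀ i, ∑ j, P i j = 1)
    (hQ0 : ∀ i j, 0 ≤ Qm i j) (hQ1 : ∀ i, ∑ j, Qm i j = 1) (r0 : Fin NN) (s0 : Fin MM) :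
    ∃ S : MJLSReal NN MM P Qm, ∀ ω, S.r 0 ω = r0 ∧ S.s 0 ω = s0 := by
  obtain ⟨μ, hμ, hμM⟩ := exists_chain P hP0 hP1 r0
  obtain ⟨ν, hν, hνM⟩ := exists_chain Qm hQ0 hQ1 s0
  refine ⟨{ Ω := (ℕ × Fin NN → Fin NN) × (ℕ × Fin MM → Fin MM)
            inst := inferInstance
            μ := μ.prod ν
            prob := inferInstance
            r := fun k ω => chainProc r0 k ω.1
            s := fun k ω => chainProc s0 k ω.2
            meas_r := fun k => (chainProc_measurable r0 k).comp measurable_fst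
            meas_s := fun k => (chainProc_measurable s0 k).comp measurable_snd
            markov_r := hμM.comp_mp (chainProc_measurable r0) measurePreserving_fst
            markov_s := hνM.comp_mp (chainProc_measurable s0) measurePreserving_snd
            indep := ?_ }, fun ω => ⟨rfl, rfl⟩⟩
  exact indepFun_prod (X := fun ω l => chainProc r0 l ω) (Y := fun ω l => chainProc s0 l ω)
    (measurable_pi_lambda _ (chainProc_measurable r0))
    (measurable_pi_lambda _ (chainProc_measurable s0))

/-! ### The extended process -/

lemma intToFin_zero (T : ℕ) [NeZero T] : intToFin T 0 = 0 := by
  ext; simp [intToFin]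

lemma intToFin_succ (T : ℕ) [NeZero T] (a : ℤ) : intToFin T (a + 1) = intToFin T a + 1 := by
  have hT : 0 < (T : ℤ) := by exact_mod_cast Nat.pos_of_ne_zero (NeZero.ne T)
  ext
  have h0 := Int.emod_nonneg a hT.ne'
  have h1 := Int.emod_nonneg (a + 1) hT.ne'
  simp only [intToFin, Fin.val_add, Fin.val_one']
  zify
  rw [Int.toNat_of_nonneg h1, Int.toNat_of_nonneg h0]
  simp [Int.add_emod]

section rbar
variable {Ω : Type} {NN MM T : ℕ} [NeZero T] (r : ℕ → Ω → Fin NN)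
    (s : ℕ → Ω → Fin MM) (f : Fin MM → Bool) (τ₀ : ℤ) (σ₀ : Fin NN)

lemma rbar_of_true (k : ℕ) (ω : Ω) (h : f (s k ω) = true) :
    rbarProc (T := T) r s f τ₀ σ₀ k ω = (r k ω, s k ω, r k ω, 0) := by
  have hex : ∃ j ≤ k, f (s j ω) = true := ⟨k, le_rfl, h⟩
  classical
  have hg : Nat.findGreatest (fun j => f (s j ω) = true) k = k := Nat.findGreatest_eq_iff.2
    ⟨le_rfl, fun _ => h, fun a b c => by omega⟩
  simp only [rbarProc, sigmaProc, rhoProc, tauZ, if_pos hex]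
  refine Prod.ext rfl (Prod.ext rfl (Prod.ext ?_ ?_))
  · show r _ ω = r k ω
    congr 1
  · show intToFin T _ = 0
    rw [← intToFin_zero]
    congr 1
    rw [sub_eq_zero]
    norm_cast
    symm
    convert hg

lemma rbar_zero_false (ω : Ω) (h : f (s 0 ω) = false) :
    rbarProc (T := T) r s f τ₀ σ₀ 0 ω = (r 0 ω, s 0 ω, σ₀, intToFin T (-τ₀)) := by
  have hex : ¬ ∃ j ≤ 0, f (s j ω) = true := by
    rintro ⟨j, hj, hf⟩
    obtain rfl : j = 0 := by omega
    simp [h] at hf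
  simp [rbarProc, sigmaProc, rhoProc, tauZ, h]

lemma rbar_succ_false (k : ℕ) (ω : Ω) (h : f (s (k + 1) ω) = false) :
    rbarProc (T := T) r s f τ₀ σ₀ (k + 1) ω = (r (k + 1) ω, s (k + 1) ω,
      (rbarProc (T := T) r s f τ₀ σ₀ k ω).2.2.1,
      (rbarProc (T := T) r s f τ₀ σ₀ k ω).2.2.2 + 1) := by
  have hex : (∃ j ≤ k + 1, f (s j ω) = true) ↔ ∃ j ≤ k, f (s j ω) = true := by
    constructor
    · rintro ⟨j, hj, hf⟩
      refine ⟨j, ?_, hf⟩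
      rcases Nat.lt_or_ge k j with h' | h'
      · obtain rfl : j = k + 1 := by omega
        simp [h] at hf
      · exact h'
    · rintro ⟨j, hj, hf⟩
      exact ⟨j, by omega, hf⟩
  have hg : tauZ s f τ₀ (k + 1) ω = tauZ s f τ₀ k ω := by
    simp only [tauZ, hex]
    rw [Nat.findGreatest_of_not (by simp [h])]
  have hs : sigmaProc r s f σ₀ (k + 1) ω = sigmaProc r s f σ₀ k ω := by
    simp only [sigmaProc, hex]
    rw [Nat.findGreatest_of_not (by simp [h])]
  simp only [rbarProc, rhoProc, hg, hs]
  rw [← intToFin_succ]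
  push_cast
  congr 4
  ring

lemma rbar_inX (k : ℕ) (ω : Ω) : inX f (rbarProc (T := T) r s f τ₀ σ₀ k ω) := by
  intro h
  rw [rbar_of_true _ _ _ _ _ _ _ h]
  exact ⟨rfl, rfl⟩

lemma rbar_fst (k : ℕ) (ω : Ω) : (rbarProc (T := T) r s f τ₀ σ₀ k ω).1 = r k ω := rfl
lemma rbar_snd (k : ℕ) (ω : Ω) : (rbarProc (T := T) r s f τ₀ σ₀ k ω).2.1 = s k ω := rfl

lemma rbar_congr (k : ℕ) (ω ω' : Ω) (hr : ∀ l ≤ k, r l ω = r l ω')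
    (hs : ∀ l ≤ k, s l ω = s l ω') :
    rbarProc (T := T) r s f τ₀ σ₀ k ω = rbarProc (T := T) r s f τ₀ σ₀ k ω' := by
  induction k with
  | zero =>
    cases h : f (s 0 ω) with
    | true =>
      have h' : f (s 0 ω') = true := by rw [← hs 0 le_rfl, h]
      rw [rbar_of_true _ _ _ _ _ _ _ h, rbar_of_true _ _ _ _ _ _ _ h', hr 0 le_rfl, hs 0 le_rfl]
    | false =>
      have h' : f (s 0 ω') = false := by rw [← hs 0 le_rfl, h]
      rw [rbar_zero_false _ _ _ _ _ _ h, rbar_zero_false _ _ _ _ _ _ h', hr 0 le_rfl,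
        hs 0 le_rfl]
  | succ k ih =>
    have ih' := ih (fun l hl => hr l (by omega)) (fun l hl => hs l (by omega))
    cases h : f (s (k + 1) ω) with
    | true =>
      have h' : f (s (k + 1) ω') = true := by rw [← hs _ le_rfl, h]
      rw [rbar_of_true _ _ _ _ _ _ _ h, rbar_of_true _ _ _ _ _ _ _ h', hr _ le_rfl, hs _ le_rfl]
    | false =>
      have h' : f (s (k + 1) ω') = false := by rw [← hs _ le_rfl, h]
      rw [rbar_succ_false _ _ _ _ _ _ _ h, rbar_succ_false _ _ _ _ _ _ _ h', hr _ le_rfl,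
        hs _ le_rfl, ih']

end rbar

lemma rbar_markov {NN MM T : ℕ} [NeZero T] {P : Matrix (Fin NN) (Fin NN) ℝ}
    {Qm : Matrix (Fin MM) (Fin MM) ℝ} (S : MJLSReal NN MM P Qm) (f : Fin MM → Bool)
    (τ₀ : ℤ) (σ₀ : Fin NN) :
    @IsMarkovChain S.Ω S.inst S.μ _ (rbarProc (T := T) S.r S.s f τ₀ σ₀) (pbar P Qm f) := by
  let _ := S.inst
  have := S.prob
  obtain ⟨Ω, _, μ, _, r, s, mr, ms, hr, hs, hind⟩ := S
  dsimp only at *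
  -- joint Markov property
  have hset : ∀ (N : ℕ) (k : ℕ) (i : ℕ → Fin N),
      MeasurableSet {x : ℕ → Fin N | ∀ l ≤ k, x l = i l} := by
    intro N k i
    have : {x : ℕ → Fin N | ∀ l ≤ k, x l = i l}
        = ⋂ l, ⋂ (_ : l ≤ k), (fun x => x l) ⁻¹' {i l} := by ext; simp
    rw [this]
    exact MeasurableSet.iInter fun l => MeasurableSet.iInter fun _ =>
      measurable_pi_apply l (measurableSet_singleton _)
  have hset' : ∀ (N : ℕ) (k : ℕ) (j : Fin N) (i : ℕ → Fin N),
      MeasurableSet {x : ℕ → Fin N | x (k + 1) = j ∧ ∀ l ≤ k, x l = i l} := by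
    intro N k j i
    exact (measurable_pi_apply (k + 1) (measurableSet_singleton j)).inter (hset N k i)
  have hjoint : ∀ (A : Set (ℕ → Fin NN)) (B : Set (ℕ → Fin MM)), MeasurableSet A →
      MeasurableSet B → (μ {ω | (fun l => r l ω) ∈ A ∧ (fun l => s l ω) ∈ B}).toReal
        = (μ {ω | (fun l => r l ω) ∈ A}).toReal * (μ {ω | (fun l => s l ω) ∈ B}).toReal := by
    intro A B hA hB
    have := hind.measure_inter_preimage_eq_mul A B hA hB
    rw [← ENNReal.toReal_mul]
    exact congrArg _ this
  intro k j i
  by_cases hne : ∃ ω0, ∀ l ≤ k, rbarProc (T := T) r s f τ₀ σ₀ l ω0 = i l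
  · obtain ⟨ω0, h0⟩ := hne
    have e2 : {ω | ∀ l ≤ k, rbarProc (T := T) r s f τ₀ σ₀ l ω = i l}
        = {ω | (fun l => r l ω) ∈ {x : ℕ → Fin NN | ∀ l ≤ k, x l = (i l).1} ∧
            (fun l => s l ω) ∈ {x : ℕ → Fin MM | ∀ l ≤ k, x l = (i l).2.1}} := by
      ext ω
      constructor
      · intro h
        exact ⟨fun l hl => by rw [← h l hl]; rfl, fun l hl => by rw [← h l hl]; rfl⟩
      · rintro ⟨h1, h2⟩ l hl
        rw [← h0 l hl]
        refine rbar_congr _ _ _ _ _ _ _ _ (fun a ha => ?_) (fun a ha => ?_)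
        · have := h1 a (by omega)
          rw [← h0 a (by omega)] at this
          exact this
        · have := h2 a (by omega)
          rw [← h0 a (by omega)] at this
          exact this
    have hk2 := hjoint _ _ (hset NN k (fun l => (i l).1)) (hset MM k (fun l => (i l).2.1))
    have hk1 := hjoint _ _ (hset' NN k j.1 (fun l => (i l).1))
      (hset' MM k j.2.1 (fun l => (i l).2.1))
    have hr' := hr k j.1 (fun l => (i l).1)
    have hs' := hs k j.2.1 (fun l => (i l).2.1)
    have e1 : ∀ c : Prop, (∀ ω, r (k + 1) ω = j.1 → s (k + 1) ω = j.2.1 →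
          (∀ l ≤ k, rbarProc (T := T) r s f τ₀ σ₀ l ω = i l) →
          (rbarProc (T := T) r s f τ₀ σ₀ (k + 1) ω = j ↔ c)) →
        {ω | rbarProc (T := T) r s f τ₀ σ₀ (k + 1) ω = j ∧
          ∀ l ≤ k, rbarProc (T := T) r s f τ₀ σ₀ l ω = i l}
        = {ω | c ∧ ω ∈ {ω | (fun l => r l ω) ∈ {x : ℕ → Fin NN | x (k + 1) = j.1 ∧
              ∀ l ≤ k, x l = (i l).1} ∧
            (fun l => s l ω) ∈ {x : ℕ → Fin MM | x (k + 1) = j.2.1 ∧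
              ∀ l ≤ k, x l = (i l).2.1}}} := by
      intro c hc
      ext ω
      have e2' := Set.ext_iff.1 e2 ω
      constructor
      · rintro ⟨h1, h2⟩
        have ha : r (k + 1) ω = j.1 := by rw [← h1]; rfl
        have hb : s (k + 1) ω = j.2.1 := by rw [← h1]; rfl
        have h3 := e2'.1 h2
        exact ⟨(hc ω ha hb h2).1 h1, ⟨ha, h3.1⟩, ⟨hb, h3.2⟩⟩
      · rintro ⟨h1, ⟨ha, h3⟩, ⟨hb, h4⟩⟩
        have h2 := e2'.2 ⟨h3, h4⟩
        exact ⟨(hc ω ha hb h2).2 h1, h2⟩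
    have fin : ∀ c : Prop, [Decidable c] → (∀ ω, r (k + 1) ω = j.1 → s (k + 1) ω = j.2.1 →
          (∀ l ≤ k, rbarProc (T := T) r s f τ₀ σ₀ l ω = i l) →
          (rbarProc (T := T) r s f τ₀ σ₀ (k + 1) ω = j ↔ c)) →
        (μ {ω | rbarProc (T := T) r s f τ₀ σ₀ (k + 1) ω = j ∧
          ∀ l ≤ k, rbarProc (T := T) r s f τ₀ σ₀ l ω = i l}).toReal
        = (if c then (1 : ℝ) else 0) * P (i k).1 j.1 * Qm (i k).2.1 j.2.1 *
        (μ {ω | ∀ l ≤ k, rbarProc (T := T) r s f τ₀ σ₀ l ω = i l}).toReal := by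
      intro c _ hc
      rw [e1 c hc, e2]
      by_cases hcc : c
      · have : ∀ A : Set Ω, {ω | c ∧ ω ∈ A} = A := fun A => by ext; simp [hcc]
        rw [this, hk1, hk2, if_pos hcc]
        refine (congrArg₂ (· * ·) hr' hs').trans ?_
        simp only [Set.mem_ofPred_eq]
        ring
      · have : ∀ A : Set Ω, {ω | c ∧ ω ∈ A} = ∅ := fun A => by ext; simp [hcc]
        rw [this, if_neg hcc]
        simp
    unfold pbar
    cases hf : f j.2.1 with
    | true =>
      rw [if_pos rfl]
      refine fin _ fun ω ha hb _ => ?_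
      rw [rbar_of_true _ _ _ _ _ _ _ (by rw [hb, hf]), ha, hb]
      obtain ⟨a, b, c, d⟩ := j
      simp [eq_comm]
    | false =>
      rw [if_neg (by simp)]
      refine fin _ fun ω ha hb h => ?_
      rw [rbar_succ_false _ _ _ _ _ _ _ (by rw [hb, hf]), ha, hb, h k le_rfl]
      obtain ⟨a, b, c, d⟩ := j
      simp [eq_comm]
  · push Not at hne
    have e1 : {ω | rbarProc (T := T) r s f τ₀ σ₀ (k + 1) ω = j ∧
        ∀ l ≤ k, rbarProc (T := T) r s f τ₀ σ₀ l ω = i l} = ∅ := by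
      ext ω
      simp only [Set.mem_ofPred_eq, Set.mem_empty_iff_false, iff_false, not_and]
      intro _ h
      obtain ⟨l, hl, h'⟩ := hne ω
      exact h' (h l hl)
    have e2 : {ω | ∀ l ≤ k, rbarProc (T := T) r s f τ₀ σ₀ l ω = i l} = ∅ := by
      ext ω
      simp only [Set.mem_ofPred_eq, Set.mem_empty_iff_false, iff_false]
      intro h
      obtain ⟨l, hl, h'⟩ := hne ω
      exact h' (h l hl)
    rw [e1, e2]; simp

lemma rbar_measurable {Ω : Type} [MeasurableSpace Ω] {NN MM T : ℕ} [NeZero T]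
    (r : ℕ → Ω → Fin NN) (s : ℕ → Ω → Fin MM) (f : Fin MM → Bool) (τ₀ : ℤ) (σ₀ : Fin NN)
    (hr : ∀ k, Measurable (r k)) (hs : ∀ k, Measurable (s k)) (k : ℕ) :
    Measurable (rbarProc (T := T) r s f τ₀ σ₀ k) := by
  let H : Ω → (Fin (k + 1) → Fin NN × Fin MM) := fun ω l => (r l ω, s l ω)
  have hH : Measurable H := measurable_pi_lambda _ fun l => (hr _).prodMk (hs _)
  have hfac : (rbarProc (T := T) r s f τ₀ σ₀ k).FactorsThrough H := by
    intro ω ω' h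
    refine rbar_congr _ _ _ _ _ _ _ _ (fun l hl => ?_) (fun l hl => ?_)
    · exact congrArg Prod.fst (congrFun h ⟨l, by omega⟩)
    · exact congrArg Prod.snd (congrFun h ⟨l, by omega⟩)
  by_cases hΩ : Nonempty Ω
  · have : Nonempty (XT NN MM T) := ⟨rbarProc (T := T) r s f τ₀ σ₀ k hΩ.some⟩
    obtain ⟨e, he⟩ := (Function.factorsThrough_iff _).1 hfac
    rw [he]
    exact (measurable_of_finite e).comp hH
  · rw [not_nonempty_iff] at hΩ
    exact measurable_of_empty _

def thetaOf {NN MM T : ℕ} [NeZero T] {P : Matrix (Fin NN) (Fin NN) ℝ}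
    {Qm : Matrix (Fin MM) (Fin MM) ℝ} (S : MJLSReal NN MM P Qm) (f : Fin MM → Bool)
    (τ₀ : ℤ) (σ₀ : Fin NN) : ThetaReal NN MM T P Qm f where
  Ω := S.Ω
  inst := S.inst
  μ := S.μ
  prob := S.prob
  θ := rbarProc S.r S.s f τ₀ σ₀
  meas := @rbar_measurable _ S.inst _ _ _ _ _ _ _ _ _ S.meas_r S.meas_s
  mem := fun _ _ => rbar_inX _ _ _ _ _ _ _
  markov := rbar_markov S f τ₀ σ₀

/-! ### Second moments -/

lemma hist_factor {Ω S : Type} [MeasurableSpace Ω] [Fintype S]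
    [MeasurableSpace S] [MeasurableSingletonClass S] {X : ℕ → Ω → S}
    (hm : ∀ k, Measurable (X k)) (k : ℕ) (F : Ω → ℝ)
    (hF : ∀ ω ω', (∀ l ≤ k, X l ω = X l ω') → F ω = F ω') :
    ∃ (H : Ω → (Fin (k + 1) → S)) (e : (Fin (k + 1) → S) → ℝ), Measurable H ∧
      (∀ ω l, H ω l = X l ω) ∧ ∀ ω, F ω = e (H ω) := by
  let H : Ω → (Fin (k + 1) → S) := fun ω l => X l ω
  have hH : Measurable H := measurable_pi_lambda _ fun l => hm _
  have hfac : F.FactorsThrough H := by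
    intro ω ω' h
    exact hF ω ω' fun l hl => congrFun h ⟨l, by omega⟩
  obtain ⟨e, he⟩ := (Function.factorsThrough_iff _).1 hfac
  exact ⟨H, e, hH, fun _ _ => rfl, fun ω => congrFun he ω⟩

lemma hist_integrable {Ω S : Type} [MeasurableSpace Ω] {μ : Measure Ω} [IsProbabilityMeasure μ]
    [Fintype S] [MeasurableSpace S] [MeasurableSingletonClass S] {X : ℕ → Ω → S}
    (hm : ∀ k, Measurable (X k)) (k : ℕ) (F : Ω → ℝ)
    (hF : ∀ ω ω', (∀ l ≤ k, X l ω = X l ω') → F ω = F ω') : Integrable F μ := by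
  obtain ⟨H, e, hH, -, he⟩ := hist_factor hm k F hF
  have : F = e ∘ H := funext he
  rw [this]
  have hp : IsProbabilityMeasure (μ.map H) := Measure.isProbabilityMeasure_map hH.aemeasurable
  exact (Integrable.of_finite : Integrable e (μ.map H)).comp_measurable hH

lemma one_step {Ω S : Type} [MeasurableSpace Ω] {μ : Measure Ω} [IsProbabilityMeasure μ]
    [Fintype S] [DecidableEq S] [MeasurableSpace S] [MeasurableSingletonClass S] {X : ℕ → Ω → S}
    (hm : ∀ k, Measurable (X k)) {p : S → S → ℝ} (h : IsMarkovChain μ X p) (k : ℕ) (F : Ω → ℝ)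
    (hF : ∀ ω ω', (∀ l ≤ k, X l ω = X l ω') → F ω = F ω') (j : S) :
    ∫ ω, (if X (k + 1) ω = j then F ω else 0) ∂μ
      = ∑ i, p i j * ∫ ω, (if X k ω = i then F ω else 0) ∂μ := by
  classical
  obtain ⟨H, e, hH, hHX, he⟩ := hist_factor hm k F hF
  have hHm : ∀ g, MeasurableSet {ω | H ω = g} := fun g => hH (measurableSet_singleton g)
  -- general formula
  have gen : ∀ D : Set Ω, MeasurableSet D → ∀ G : (Fin (k + 1) → S) → ℝ,
      ∫ ω, (if ω ∈ D then G (H ω) else 0) ∂μ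
        = ∑ g, (μ (D ∩ {ω | H ω = g})).toReal * G g := by
    intro D hD G
    have : (fun ω => if ω ∈ D then G (H ω) else 0)
        = fun ω => ∑ g, (D ∩ {ω | H ω = g}).indicator (fun _ => G g) ω := by
      funext ω
      by_cases hω : ω ∈ D
      · simp [Set.indicator_apply, hω]
      · simp [hω]
    rw [this, integral_finset_sum]
    · refine Finset.sum_congr rfl fun g _ => ?_
      rw [integral_indicator_const _ (hD.inter (hHm g))]
      rfl
    · intro g _
      exact (integrable_const _).indicator (hD.inter (hHm g))
  have hset : ∀ g : Fin (k + 1) → S, {ω | H ω = g}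
      = {ω | ∀ l ≤ k, X l ω = (fun l => if hl : l < k + 1 then g ⟨l, hl⟩ else g 0) l} := by
    intro g
    ext ω
    simp only [Set.mem_ofPred_eq]
    constructor
    · rintro rfl l hl
      rw [dif_pos (by omega), hHX]
    · intro hl
      funext l
      have := hl l (by omega)
      rw [dif_pos l.2] at this
      rw [hHX, this]
  have hstep : ∀ g : Fin (k + 1) → S,
      (μ ({ω | X (k + 1) ω = j} ∩ {ω | H ω = g})).toReal
        = p (g ⟨k, by omega⟩) j * (μ {ω | H ω = g}).toReal := by
    intro g
    have := h k j (fun l => if hl : l < k + 1 then g ⟨l, hl⟩ else g 0)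
    rw [← hset g] at this
    rw [dif_pos (by omega)] at this
    rw [← this]
    congr 2
    rw [hset g]
    rfl
  have l1 := gen {ω | X (k + 1) ω = j} (hm _ (measurableSet_singleton j)) e
  have l2 : ∀ i, ∫ ω, (if X k ω = i then F ω else 0) ∂μ
      = ∑ g, (μ {ω | H ω = g}).toReal * (if g ⟨k, by omega⟩ = i then e g else 0) := by
    intro i
    have := gen Set.univ MeasurableSet.univ (fun g => if g ⟨k, by omega⟩ = i then e g else 0)
    simp only [Set.univ_inter, Set.mem_univ, if_true, hHX, ← he] at this
    exact this
  simp only [Set.mem_ofPred_eq, ← he, hstep] at l1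
  rw [l1]
  simp only [l2, Finset.mul_sum]
  rw [Finset.sum_comm]
  refine Finset.sum_congr rfl fun g _ => ?_
  rw [Finset.sum_eq_single (g ⟨k, by omega⟩)]
  · simp; ring
  · intro i _ hi
    simp [Ne.symm hi]
  · simp

section moments
variable {NN MM T n q : ℕ} [NeZero T] {P : Matrix (Fin NN) (Fin NN) ℝ}
  {Qm : Matrix (Fin MM) (Fin MM) ℝ} {f : Fin MM → Bool}

lemma traj_hist {Ω S : Type} (A : S → Matrix (Fin n) (Fin n) ℝ) (E : S → Matrix (Fin n) (Fin q) ℝ)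
    (X : ℕ → Ω → S) (x0 : Fin n → ℝ) (k : ℕ) (ω ω' : Ω) (h : ∀ l < k, X l ω = X l ω') :
    traj A E X (fun _ _ => 0) x0 k ω = traj A E X (fun _ _ => 0) x0 k ω' := by
  induction k with
  | zero => rfl
  | succ k ih =>
    simp only [traj]
    rw [ih (fun l hl => h l (by omega)), h k (by omega)]

/-- The quadratic form of `E[x(k) x(k)ᵀ 1(θ(k) = χ)]` at `v`. -/
def qm (S : ThetaReal NN MM T P Qm f) (A : XT NN MM T → Matrix (Fin n) (Fin n) ℝ)
    (E : XT NN MM T → Matrix (Fin n) (Fin q) ℝ) (x0 : Fin n → ℝ) (k : ℕ) (χ : XT NN MM T)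
    (v : Fin n → ℝ) : ℝ :=
  @integral S.Ω ℝ _ _ S.inst S.μ
    (fun ω => if S.θ k ω = χ then (v ⬝ᵥ traj A E S.θ (fun _ _ => 0) x0 k ω) ^ 2 else 0)

variable (S : ThetaReal NN MM T P Qm f) (A : XT NN MM T → Matrix (Fin n) (Fin n) ℝ)
    (E : XT NN MM T → Matrix (Fin n) (Fin q) ℝ) (x0 : Fin n → ℝ)

lemma qm_nonneg (k : ℕ) (χ : XT NN MM T) (v : Fin n → ℝ) : 0 ≤ qm S A E x0 k χ v := by
  refine integral_nonneg fun ω => ?_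
  show (0 : ℝ) ≤ if _ then _ else _
  split_ifs
  · positivity
  · exact le_rfl

lemma qm_notMem (k : ℕ) (χ : XT NN MM T) (v : Fin n → ℝ) (h : ¬ inX f χ) :
    qm S A E x0 k χ v = 0 := by
  have : ∀ ω, S.θ k ω ≠ χ := fun ω h' => h (h' ▸ S.mem k ω)
  simp [qm, this]

open Classical in
lemma qm_succ (k : ℕ) (χ : XT NN MM T) (v : Fin n → ℝ) :
    qm S A E x0 (k + 1) χ v
      = ∑ i, if inX f i then pbar P Qm f i χ * qm S A E x0 k i ((A i)ᵀ *ᵥ v) else 0 := by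
  let _ := S.inst
  have hp := S.prob
  have := one_step (μ := S.μ) S.meas S.markov k
    (fun ω => (v ⬝ᵥ traj A E S.θ (fun _ _ => 0) x0 (k + 1) ω) ^ 2)
    (fun ω ω' h => by
      rw [traj_hist A E S.θ x0 (k + 1) ω ω' (fun l hl => h l (by omega))]) χ
  rw [qm, this]
  refine Finset.sum_congr rfl fun i _ => ?_
  have e : (∫ ω, (if S.θ k ω = i then (v ⬝ᵥ traj A E S.θ (fun _ _ => 0) x0 (k + 1) ω) ^ 2 else 0)
      ∂S.μ) = qm S A E x0 k i ((A i)ᵀ *ᵥ v) := by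
    unfold qm
    congr 1
    funext ω
    split_ifs with h
    · simp only [traj, h, mulVec_zero, add_zero]
      rw [dotProduct_mulVec, mulVec_transpose]
    · rfl
  rw [e]
  split_ifs with h
  · rfl
  · rw [qm_notMem _ _ _ _ _ _ _ h, mul_zero]

lemma qm_zero (χ0 : XT NN MM T) (h0 : ∀ᵐ ω ∂S.μ, S.θ 0 ω = χ0)
    (χ : XT NN MM T) (v : Fin n → ℝ) :
    qm S A E x0 0 χ v = if χ0 = χ then (v ⬝ᵥ x0) ^ 2 else 0 := by
  have hp := S.prob
  have : qm S A E x0 0 χ v = @integral S.Ω ℝ _ _ S.inst S.μ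
      (fun _ => if χ0 = χ then (v ⬝ᵥ x0) ^ 2 else 0) := by
    refine integral_congr_ae ?_
    filter_upwards [h0] with ω hω
    rw [hω]
    rfl
  rw [this]
  simp

lemma sum_qm (k : ℕ) :
    @lintegral S.Ω S.inst S.μ (fun ω => sqE (traj A E S.θ (fun _ _ => 0) x0 k ω))
      = ENNReal.ofReal (∑ χ, ∑ a, qm S A E x0 k χ (Pi.single a 1)) := by
  let _ := S.inst
  have hp := S.prob
  have hInt : ∀ χ v, Integrable (fun ω => if S.θ k ω = χ then
      (v ⬝ᵥ traj A E S.θ (fun _ _ => 0) x0 k ω) ^ 2 else 0) S.μ := by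
    intro χ v
    refine hist_integrable S.meas k _ fun ω ω' h => ?_
    rw [traj_hist A E S.θ x0 k ω ω' (fun l hl => h l (by omega)), h k le_rfl]
  have hInt2 : Integrable (fun ω => ∑ i, (traj A E S.θ (fun _ _ => 0) x0 k ω i) ^ 2) S.μ := by
    refine hist_integrable S.meas k _ fun ω ω' h => ?_
    rw [traj_hist A E S.θ x0 k ω ω' (fun l hl => h l (by omega))]
  unfold sqE
  rw [← ofReal_integral_eq_lintegral_ofReal hInt2
    (Filter.Eventually.of_forall fun ω => Finset.sum_nonneg fun i _ => sq_nonneg _)]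
  congr 1
  simp only [qm]
  rw [Finset.sum_comm, integral_finset_sum]
  · refine Finset.sum_congr rfl fun a _ => ?_
    rw [← integral_finset_sum _ (fun χ _ => hInt χ _)]
    congr 1
    funext ω
    simp
  · intro i _
    refine hist_integrable S.meas k _ fun ω ω' h => ?_
    rw [traj_hist A E S.θ x0 k ω ω' (fun l hl => h l (by omega))]

lemma sq_dot_le (v x : Fin n → ℝ) : (v ⬝ᵥ x) ^ 2 ≤ (v ⬝ᵥ v) * (x ⬝ᵥ x) := by
  have := Finset.sum_mul_sq_le_sq_mul_sq Finset.univ v x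
  simpa [dotProduct, sq] using this

lemma qm_le (k : ℕ) (χ : XT NN MM T) (v : Fin n → ℝ) :
    qm S A E x0 k χ v ≤ (v ⬝ᵥ v) * ∑ χ, ∑ a, qm S A E x0 k χ (Pi.single a 1) := by
  let _ := S.inst
  have hp := S.prob
  have hInt : ∀ χ v, Integrable (fun ω => if S.θ k ω = χ then
      (v ⬝ᵥ traj A E S.θ (fun _ _ => 0) x0 k ω) ^ 2 else 0) S.μ := by
    intro χ v
    refine hist_integrable S.meas k _ fun ω ω' h => ?_
    rw [traj_hist A E S.θ x0 k ω ω' (fun l hl => h l (by omega)), h k le_rfl]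
  have hvv : 0 ≤ v ⬝ᵥ v := by
    simp only [dotProduct]
    exact Finset.sum_nonneg fun i _ => mul_self_nonneg _
  have h1 : qm S A E x0 k χ v ≤ (v ⬝ᵥ v) * ∑ a, qm S A E x0 k χ (Pi.single a 1) := by
    simp only [qm]
    rw [← integral_finset_sum _ (fun a _ => hInt χ _), ← integral_const_mul]
    refine integral_mono (hInt χ v)
      ((integrable_finset_sum _ (fun a _ => hInt χ _)).const_mul _) fun ω => ?_
    simp only []
    split_ifs
    · refine (sq_dot_le _ _).trans (le_of_eq ?_)
      simp only [single_one_dotProduct]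
      simp [dotProduct, sq]
    · simp
  refine h1.trans (mul_le_mul_of_nonneg_left ?_ hvv)
  exact Finset.single_le_sum (f := fun χ => ∑ a, qm S A E x0 k χ (Pi.single a 1))
    (fun χ _ => Finset.sum_nonneg fun a _ => qm_nonneg _ _ _ _ _ _ _) (Finset.mem_univ χ)

end moments

/-! ### Quadratic forms -/

lemma dot_self_nonneg {n : ℕ} (v : Fin n → ℝ) : 0 ≤ v ⬝ᵥ v :=
  Finset.sum_nonneg fun i _ => mul_self_nonneg _

lemma quad_min {n : ℕ} [NeZero n] (M : Matrix (Fin n) (Fin n) ℝ) :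
    ∃ v0 : Fin n → ℝ, v0 ≠ 0 ∧ ∀ v : Fin n → ℝ, (v0 ⬝ᵥ M *ᵥ v0) * (v ⬝ᵥ v) ≤ v ⬝ᵥ M *ᵥ v := by
  have hc1 : Continuous fun v : Fin n → ℝ => v ⬝ᵥ v := by
    unfold dotProduct; fun_prop
  have hc2 : Continuous fun v : Fin n → ℝ => v ⬝ᵥ M *ᵥ v := by
    unfold mulVec dotProduct; fun_prop
  have hcomp : IsCompact {v : Fin n → ℝ | v ⬝ᵥ v = 1} := by
    refine Metric.isCompact_of_isClosed_isBounded (isClosed_eq hc1 continuous_const) ?_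
    refine (Metric.isBounded_closedBall (x := (0 : Fin n → ℝ)) (r := 1)).subset ?_
    intro v hv
    rw [mem_closedBall_zero_iff, pi_norm_le_iff_of_nonneg zero_le_one]
    intro i
    have h1 : v i * v i ≤ v ⬝ᵥ v :=
      Finset.single_le_sum (f := fun i => v i * v i) (fun i _ => mul_self_nonneg _)
        (Finset.mem_univ i)
    have h2 : v ⬝ᵥ v = 1 := hv
    rw [Real.norm_eq_abs, ← sq_le_one_iff_abs_le_one]
    nlinarith
  obtain ⟨v0, hv0, hmin⟩ := hcomp.exists_isMinOn
    ⟨Pi.single 0 1, by simp⟩ hc2.continuousOn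
  have hv0' : v0 ⬝ᵥ v0 = 1 := hv0
  refine ⟨v0, by rintro rfl; simp at hv0', fun v => ?_⟩
  by_cases hv : v = 0
  · simp [hv]
  · have hpos : 0 < v ⬝ᵥ v := lt_of_le_of_ne (dot_self_nonneg v)
      (fun h => hv (dotProduct_self_eq_zero.1 h.symm))
    have hs : Real.sqrt (v ⬝ᵥ v) * Real.sqrt (v ⬝ᵥ v) = v ⬝ᵥ v := Real.mul_self_sqrt hpos.le
    have hs0 : 0 < Real.sqrt (v ⬝ᵥ v) := Real.sqrt_pos.2 hpos
    set t := Real.sqrt (v ⬝ᵥ v)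
    have hmem : t⁻¹ • v ∈ {v : Fin n → ℝ | v ⬝ᵥ v = 1} := by
      show (t⁻¹ • v) ⬝ᵥ (t⁻¹ • v) = 1
      rw [smul_dotProduct, dotProduct_smul, ← hs]
      simp only [smul_eq_mul]
      field_simp
    have := isMinOn_iff.1 hmin _ hmem
    simp only [mulVec_smul, smul_dotProduct, dotProduct_smul, smul_eq_mul] at this
    rw [← hs]
    calc (v0 ⬝ᵥ M *ᵥ v0) * (t * t) ≤ (t⁻¹ * (t⁻¹ * (v ⬝ᵥ M *ᵥ v))) * (t * t) := by gcongr
      _ = v ⬝ᵥ M *ᵥ v := by field_simp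

lemma quad_lower {n : ℕ} [NeZero n] {M : Matrix (Fin n) (Fin n) ℝ} (hM : M.PosDef) :
    ∃ b : ℝ, 0 < b ∧ ∀ v : Fin n → ℝ, b * (v ⬝ᵥ v) ≤ v ⬝ᵥ M *ᵥ v := by
  obtain ⟨v0, h0, h⟩ := quad_min M
  exact ⟨_, by simpa using hM.dotProduct_mulVec_pos h0, h⟩

lemma quad_upper {n : ℕ} [NeZero n] (M : Matrix (Fin n) (Fin n) ℝ) :
    ∃ C : ℝ, ∀ v : Fin n → ℝ, v ⬝ᵥ M *ᵥ v ≤ C * (v ⬝ᵥ v) := by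
  obtain ⟨v0, h0, h⟩ := quad_min (-M)
  refine ⟨-(v0 ⬝ᵥ (-M) *ᵥ v0), fun v => ?_⟩
  have := h v
  have e : v ⬝ᵥ (-M) *ᵥ v = - (v ⬝ᵥ M *ᵥ v) := by rw [neg_mulVec, dotProduct_neg]
  rw [e] at this
  linarith

lemma unif_lower {ι : Type} [Finite ι] {n : ℕ} [NeZero n] (p : ι → Prop)
    (M : ι → Matrix (Fin n) (Fin n) ℝ) (hM : ∀ i, p i → (M i).PosDef) :
    ∃ b : ℝ, 0 < b ∧ b ≤ 1 ∧
      ∀ i, p i → ∀ v : Fin n → ℝ, b * (v ⬝ᵥ v) ≤ v ⬝ᵥ M i *ᵥ v := by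
  have h : ∀ i, ∀ᶠ b : ℝ in nhdsWithin 0 (Set.Ioi 0),
      p i → ∀ v : Fin n → ℝ, b * (v ⬝ᵥ v) ≤ v ⬝ᵥ M i *ᵥ v := by
    intro i
    by_cases hp : p i
    · obtain ⟨b, hb, hv⟩ := quad_lower (hM i hp)
      filter_upwards [Ioo_mem_nhdsGT hb] with c hc _ v
      exact (mul_le_mul_of_nonneg_right hc.2.le (dot_self_nonneg v)).trans (hv v)
    · exact Filter.Eventually.of_forall fun _ h => absurd h hp
  have h1 : ∀ᶠ b : ℝ in nhdsWithin 0 (Set.Ioi 0), b ∈ Set.Ioo (0 : ℝ) 1 :=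
    Ioo_mem_nhdsGT zero_lt_one
  obtain ⟨b, hb, hb1⟩ := ((Filter.eventually_all.2 h).and h1).exists
  exact ⟨b, hb1.1, hb1.2.le, hb⟩

lemma unif_upper {ι : Type} [Finite ι] {n : ℕ} [NeZero n]
    (M : ι → Matrix (Fin n) (Fin n) ℝ) :
    ∃ C : ℝ, 1 ≤ C ∧ ∀ i, ∀ v : Fin n → ℝ, v ⬝ᵥ M i *ᵥ v ≤ C * (v ⬝ᵥ v) := by
  have h : ∀ i, ∀ᶠ C : ℝ in Filter.atTop,
      ∀ v : Fin n → ℝ, v ⬝ᵥ M i *ᵥ v ≤ C * (v ⬝ᵥ v) := by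
    intro i
    obtain ⟨C, hC⟩ := quad_upper (M i)
    filter_upwards [Filter.eventually_ge_atTop C] with c hc v
    exact (hC v).trans (mul_le_mul_of_nonneg_right hc (dot_self_nonneg v))
  obtain ⟨C, hC, hC1⟩ := ((Filter.eventually_all.2 h).and (Filter.eventually_ge_atTop 1)).exists
  exact ⟨C, hC1, hC⟩

open Classical in
lemma quad_Dop {NN MM T n : ℕ} [NeZero T] (P : Matrix (Fin NN) (Fin NN) ℝ)
    (Qm : Matrix (Fin MM) (Fin MM) ℝ) (f : Fin MM → Bool)
    (A R : XT NN MM T → Matrix (Fin n) (Fin n) ℝ) (χ : XT NN MM T) (v : Fin n → ℝ) :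
    v ⬝ᵥ Dop P Qm f (fun χ' => A χ' * R χ' * (A χ')ᵀ) χ *ᵥ v
      = ∑ i, if inX f i then pbar P Qm f i χ *
          (((A i)ᵀ *ᵥ v) ⬝ᵥ R i *ᵥ ((A i)ᵀ *ᵥ v)) else 0 := by
  unfold Dop
  rw [sum_mulVec, dotProduct_sum]
  refine Finset.sum_congr rfl fun i _ => ?_
  split_ifs
  · rw [smul_mulVec, dotProduct_smul, smul_eq_mul]
    congr 1
    rw [← mulVec_mulVec, ← mulVec_mulVec, dotProduct_mulVec v, mulVec_transpose]
  · simp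

lemma pbar_nonneg {NN MM T : ℕ} [NeZero T] {P : Matrix (Fin NN) (Fin NN) ℝ}
    {Qm : Matrix (Fin MM) (Fin MM) ℝ} (hP0 : ∀ i j, 0 ≤ P i j) (hQ0 : ∀ i j, 0 ≤ Qm i j)
    (f : Fin MM → Bool) (χ χ' : XT NN MM T) : 0 ≤ pbar P Qm f χ χ' := by
  unfold pbar
  refine mul_nonneg (mul_nonneg ?_ (hP0 _ _)) (hQ0 _ _)
  split_ifs <;> norm_num

/-! ### (iii) implies (ii) -/

lemma bar_of_lyap {NN MM T n m q : ℕ} [NeZero T] [NeZero n]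
    (P : Matrix (Fin NN) (Fin NN) ℝ) (Qm : Matrix (Fin MM) (Fin MM) ℝ)
    (hP0 : ∀ i j, 0 ≤ P i j) (hQ0 : ∀ i j, 0 ≤ Qm i j)
    (f : Fin MM → Bool)
    (A : Fin NN → Matrix (Fin n) (Fin n) ℝ) (B : Fin NN → Matrix (Fin n) (Fin m) ℝ)
    (E : Fin NN → Matrix (Fin n) (Fin q) ℝ)
    (K : Fin NN → Fin T → Matrix (Fin m) (Fin n) ℝ)
    (Qmat : XT NN MM T → Matrix (Fin n) (Fin n) ℝ)
    (hpos : ∀ χ, inX f χ → (Qmat χ).PosDef)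
    (hly : ∀ χ, inX f χ →
            (Qmat χ - Dop P Qm f
              (fun χ' => AKmat A B K χ' * Qmat χ' * (AKmat A B K χ')ᵀ) χ).PosDef) :
    MeanSquareStableBar P Qm f A B E K := by
  classical
  obtain ⟨a, ha, -, hlow⟩ := unif_lower (inX f) Qmat hpos
  obtain ⟨b, hb, hb1, hly'⟩ := unif_lower (inX f) _ hly
  obtain ⟨C, hC, hup⟩ := unif_upper Qmat
  have hC0 : 0 < C := by linarith
  have hlam0 : 0 ≤ 1 - b / C := by
    rw [sub_nonneg, div_le_one hC0]; linarith
  have hlam1 : 1 - b / C < 1 := by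
    have : 0 < b / C := by positivity
    linarith
  set lam := 1 - b / C with hlam
  have hcontr : ∀ χ, inX f χ → ∀ v : Fin n → ℝ,
      v ⬝ᵥ Dop P Qm f (fun χ' => AKmat A B K χ' * Qmat χ' * (AKmat A B K χ')ᵀ) χ *ᵥ v
        ≤ lam * (v ⬝ᵥ Qmat χ *ᵥ v) := by
    intro χ hχ v
    have h1 := hly' χ hχ v
    rw [sub_mulVec, dotProduct_sub] at h1
    have h2 := hup χ v
    have h3 : b / C * (v ⬝ᵥ Qmat χ *ᵥ v) ≤ b * (v ⬝ᵥ v) := by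
      calc b / C * (v ⬝ᵥ Qmat χ *ᵥ v) ≤ b / C * (C * (v ⬝ᵥ v)) := by gcongr
        _ = b * (v ⬝ᵥ v) := by field_simp
    rw [hlam]
    linarith
  refine ⟨(Fintype.card (XT NN MM T) : ℝ) * n * C / a + 1, by positivity, lam, hlam0, hlam1, ?_⟩
  intro S χ0 hχ0 h0 x0 k
  have hq : ∀ k χ, inX f χ → ∀ v : Fin n → ℝ,
      qm S (AKmat A B K) (fun χ' => E χ'.1) x0 k χ v
        ≤ (x0 ⬝ᵥ x0) / a * lam ^ k * (v ⬝ᵥ Qmat χ *ᵥ v) := by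
    intro k
    induction k with
    | zero =>
      intro χ hχ v
      rw [qm_zero _ _ _ _ χ0 h0]
      have h1 := hlow χ hχ v
      have h2 := sq_dot_le v x0
      have h3 : (v ⬝ᵥ v) * (x0 ⬝ᵥ x0) ≤ (x0 ⬝ᵥ x0) / a * lam ^ 0 * (v ⬝ᵥ Qmat χ *ᵥ v) := by
        calc (v ⬝ᵥ v) * (x0 ⬝ᵥ x0) = (x0 ⬝ᵥ x0) / a * lam ^ 0 * (a * (v ⬝ᵥ v)) := by
              field_simp
              try ring
          _ ≤ _ := by
              have := dot_self_nonneg x0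
              gcongr
      split_ifs
      · exact h2.trans h3
      · exact le_trans (mul_nonneg (dot_self_nonneg _) (dot_self_nonneg _)) h3
    | succ k ih =>
      intro χ hχ v
      rw [qm_succ]
      have h1 := hcontr χ hχ v
      rw [quad_Dop] at h1
      calc _ ≤ ∑ i, (x0 ⬝ᵥ x0) / a * lam ^ k * (if inX f i then pbar P Qm f i χ *
          (((AKmat A B K i)ᵀ *ᵥ v) ⬝ᵥ Qmat i *ᵥ ((AKmat A B K i)ᵀ *ᵥ v)) else 0) := by
            refine Finset.sum_le_sum fun i _ => ?_
            split_ifs with hi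
            · have := mul_le_mul_of_nonneg_left (ih i hi ((AKmat A B K i)ᵀ *ᵥ v))
                (pbar_nonneg hP0 hQ0 f i χ)
              linarith
            · simp
        _ ≤ (x0 ⬝ᵥ x0) / a * lam ^ k * (lam * (v ⬝ᵥ Qmat χ *ᵥ v)) := by
            rw [← Finset.mul_sum]
            have := dot_self_nonneg x0
            gcongr
        _ = _ := by ring
  rw [sum_qm]
  refine ENNReal.ofReal_le_ofReal ?_
  have hx : ∑ i, (x0 i) ^ 2 = x0 ⬝ᵥ x0 := by simp [dotProduct, sq]
  rw [hx]
  have hx0 := dot_self_nonneg x0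
  calc _ ≤ ∑ χ : XT NN MM T, ∑ _a : Fin n, (x0 ⬝ᵥ x0) / a * lam ^ k * C := by
        refine Finset.sum_le_sum fun χ _ => Finset.sum_le_sum fun j _ => ?_
        by_cases hχ : inX f χ
        · refine (hq k χ hχ _).trans ?_
          have := hup χ (Pi.single j 1)
          have e : (Pi.single j 1 : Fin n → ℝ) ⬝ᵥ Pi.single j 1 = 1 := by simp
          rw [e, mul_one] at this
          gcongr
        · rw [qm_notMem _ _ _ _ _ _ _ hχ]
          positivity
    _ = (Fintype.card (XT NN MM T) : ℝ) * n * C / a * lam ^ k * (x0 ⬝ᵥ x0) := by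
        simp only [Finset.sum_const, Finset.card_univ, Fintype.card_fin, nsmul_eq_mul]
        ring
    _ ≤ _ := by
        have : 0 ≤ lam ^ k * (x0 ⬝ᵥ x0) := by positivity
        nlinarith

/-! ### (i) implies (iii) -/

/-- The iterates of the covariance operator, starting from the identity. -/
def Rit {NN MM T n : ℕ} [NeZero T] (P : Matrix (Fin NN) (Fin NN) ℝ)
    (Qm : Matrix (Fin MM) (Fin MM) ℝ) (f : Fin MM → Bool)
    (A : XT NN MM T → Matrix (Fin n) (Fin n) ℝ) :
    ℕ → XT NN MM T → Matrix (Fin n) (Fin n) ℝ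
  | 0, _ => 1
  | (k + 1), χ => Dop P Qm f (fun χ' => A χ' * Rit P Qm f A k χ' * (A χ')ᵀ) χ

lemma Rit_herm {NN MM T n : ℕ} [NeZero T] (P : Matrix (Fin NN) (Fin NN) ℝ)
    (Qm : Matrix (Fin MM) (Fin MM) ℝ) (f : Fin MM → Bool)
    (A : XT NN MM T → Matrix (Fin n) (Fin n) ℝ) (k : ℕ) (χ : XT NN MM T) :
    (Rit P Qm f A k χ).IsHermitian := by
  induction k generalizing χ with
  | zero => exact isHermitian_one
  | succ k ih =>
    simp only [Rit, Dop, IsHermitian]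
    rw [conjTranspose_sum]
    refine Finset.sum_congr rfl fun i _ => ?_
    split_ifs
    · rw [conjTranspose_smul, conjTranspose_mul, conjTranspose_mul, (ih i).eq]
      simp [conjTranspose_eq_transpose_of_trivial, Matrix.mul_assoc]
    · simp

lemma Dop_sum {NN MM T n : ℕ} [NeZero T] (P : Matrix (Fin NN) (Fin NN) ℝ)
    (Qm : Matrix (Fin MM) (Fin MM) ℝ) (f : Fin MM → Bool)
    (A : XT NN MM T → Matrix (Fin n) (Fin n) ℝ) (s : Finset ℕ)
    (R : ℕ → XT NN MM T → Matrix (Fin n) (Fin n) ℝ) (χ : XT NN MM T) :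
    Dop P Qm f (fun χ' => A χ' * (∑ l ∈ s, R l χ') * (A χ')ᵀ) χ
      = ∑ l ∈ s, Dop P Qm f (fun χ' => A χ' * R l χ' * (A χ')ᵀ) χ := by
  unfold Dop
  rw [Finset.sum_comm]
  refine Finset.sum_congr rfl fun i _ => ?_
  split_ifs
  · dsimp only
    rw [Matrix.mul_sum, Matrix.sum_mul, Finset.smul_sum]
  · simp

lemma lyap_of_bounds {NN MM T n m q : ℕ} [NeZero T]
    (P : Matrix (Fin NN) (Fin NN) ℝ) (Qm : Matrix (Fin MM) (Fin MM) ℝ)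
    (f : Fin MM → Bool)
    (A : Fin NN → Matrix (Fin n) (Fin n) ℝ) (B : Fin NN → Matrix (Fin n) (Fin m) ℝ)
    (E : Fin NN → Matrix (Fin n) (Fin q) ℝ)
    (K : Fin NN → Fin T → Matrix (Fin m) (Fin n) ℝ) (c lam : ℝ) (hc : 0 < c)
    (hl0 : 0 ≤ lam) (hl1 : lam < 1)
    (H : ∀ χ : XT NN MM T, inX f χ → ∃ S : ThetaReal NN MM T P Qm f,
      (∀ᵐ ω ∂S.μ, S.θ 0 ω = χ) ∧ ∀ (x0 : Fin n → ℝ) (k : ℕ),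
        (∫⁻ ω, sqE (traj (AKmat A B K) (fun χ' => E χ'.1) S.θ (fun _ _ => 0) x0 k ω) ∂S.μ)
          ≤ ENNReal.ofReal (c * lam ^ k * ∑ i, (x0 i) ^ 2)) :
    ∃ Qmat : XT NN MM T → Matrix (Fin n) (Fin n) ℝ,
          (∀ χ, inX f χ → (Qmat χ).PosDef) ∧
          ∀ χ, inX f χ →
            (Qmat χ - Dop P Qm f
              (fun χ' => AKmat A B K χ' * Qmat χ' * (AKmat A B K χ')ᵀ) χ).PosDef := by
  classical
  choose S hS0 hSb using fun χ : {χ : XT NN MM T // inX f χ} => H χ.1 χ.2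
  set AK : XT NN MM T → Matrix (Fin n) (Fin n) ℝ := AKmat A B K with hAK
  set R := Rit P Qm f AK with hR
  have hquad : ∀ k χ, inX f χ → ∀ v : Fin n → ℝ, v ⬝ᵥ R k χ *ᵥ v
      = ∑ χ0, ∑ a, qm (S χ0) AK (fun χ' => E χ'.1) (Pi.single a 1) k χ v := by
    intro k
    induction k with
    | zero =>
      intro χ hχ v
      simp only [qm_zero _ _ _ _ _ (hS0 _)]
      rw [Finset.sum_eq_single ⟨χ, hχ⟩]
      · simp only [if_true, dotProduct_single_one]
        simp [hR, Rit, dotProduct, sq]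
      · intro χ0 _ hne
        have : χ0.1 ≠ χ := fun h => hne (Subtype.ext h)
        simp [this]
      · simp
    | succ k ih =>
      intro χ hχ v
      simp only [qm_succ]
      have h1 := quad_Dop P Qm f AK (R k) χ v
      refine h1.trans ?_
      have h2 : ∀ χ0, ∑ a, ∑ i, (if inX f i then pbar P Qm f i χ *
          qm (S χ0) AK (fun χ' => E χ'.1) (Pi.single a 1) k i ((AK i)ᵀ *ᵥ v) else 0)
          = ∑ i, ∑ a, (if inX f i then pbar P Qm f i χ *
          qm (S χ0) AK (fun χ' => E χ'.1) (Pi.single a 1) k i ((AK i)ᵀ *ᵥ v) else 0) :=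
        fun χ0 => Finset.sum_comm
      simp only [h2]
      rw [Finset.sum_comm]
      refine Finset.sum_congr rfl fun i _ => ?_
      split_ifs with hi
      · rw [ih i hi, Finset.mul_sum]
        simp only [Finset.mul_sum]
      · simp
  have hnn : ∀ k χ, inX f χ → ∀ v : Fin n → ℝ, 0 ≤ v ⬝ᵥ R k χ *ᵥ v := by
    intro k χ hχ v
    rw [hquad k χ hχ]
    exact Finset.sum_nonneg fun _ _ => Finset.sum_nonneg fun _ _ => qm_nonneg _ _ _ _ _ _ _
  set D : ℝ := (Fintype.card {χ : XT NN MM T // inX f χ} : ℝ) * n * c with hD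
  have hle : ∀ k χ, inX f χ → ∀ v : Fin n → ℝ, v ⬝ᵥ R k χ *ᵥ v ≤ D * lam ^ k * (v ⬝ᵥ v) := by
    intro k χ hχ v
    rw [hquad k χ hχ]
    calc _ ≤ ∑ _χ0 : {χ : XT NN MM T // inX f χ}, ∑ _a : Fin n, (v ⬝ᵥ v) * (c * lam ^ k) := by
          refine Finset.sum_le_sum fun χ0 _ => Finset.sum_le_sum fun a _ => ?_
          refine (qm_le _ _ _ _ _ _ _).trans (mul_le_mul_of_nonneg_left ?_ (dot_self_nonneg v))
          have := hSb χ0 (Pi.single a 1) k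
          rw [sum_qm, ENNReal.ofReal_le_ofReal_iff (by positivity)] at this
          have e : ∑ i, ((Pi.single a 1 : Fin n → ℝ) i) ^ 2 = 1 := by
            simp [Pi.single_apply]
          rw [e, mul_one] at this
          exact this
      _ = _ := by
          simp only [Finset.sum_const, Finset.card_univ, Fintype.card_fin, nsmul_eq_mul, hD]
          ring
  obtain ⟨k, hk⟩ : ∃ k : ℕ, D * lam ^ k < 1 := by
    have ht : Filter.Tendsto (fun k : ℕ => D * lam ^ k) Filter.atTop (nhds (D * 0)) :=
      (tendsto_pow_atTop_nhds_zero_of_lt_one hl0 hl1).const_mul D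
    rw [mul_zero] at ht
    exact (ht.eventually_lt_const zero_lt_one).exists
  have hDnn : 0 ≤ D := by positivity
  have hk' : D * lam ^ (k + 1) < 1 := by
    refine lt_of_le_of_lt (mul_le_mul_of_nonneg_left ?_ hDnn) hk
    exact pow_le_pow_of_le_one hl0 hl1.le (Nat.le_succ k)
  have hvpos : ∀ v : Fin n → ℝ, v ≠ 0 → 0 < v ⬝ᵥ v := fun v hv =>
    lt_of_le_of_ne (dot_self_nonneg v) (fun h => hv (dotProduct_self_eq_zero.1 h.symm))
  have hR0 : ∀ χ, ∀ v : Fin n → ℝ, v ⬝ᵥ R 0 χ *ᵥ v = v ⬝ᵥ v := fun χ v => by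
    simp [hR, Rit]
  have hherm : ∀ l χ, (R l χ).IsHermitian := Rit_herm P Qm f AK
  refine ⟨fun χ => ∑ l ∈ Finset.range (k + 1), R l χ, fun χ hχ => ?_, fun χ hχ => ?_⟩
  · refine PosDef.of_dotProduct_mulVec_pos ?_ fun v hv => ?_
    · unfold IsHermitian
      rw [conjTranspose_sum]
      exact Finset.sum_congr rfl fun l _ => (hherm l χ).eq
    · rw [star_trivial, sum_mulVec, dotProduct_sum, Finset.sum_range_succ', hR0]
      have := Finset.sum_nonneg (s := Finset.range k) fun l _ => hnn (l + 1) χ hχ v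
      have := hvpos v hv
      linarith
  · have e : (∑ l ∈ Finset.range (k + 1), R l χ) - Dop P Qm f
        (fun χ' => AK χ' * (∑ l ∈ Finset.range (k + 1), R l χ') * (AK χ')ᵀ) χ
        = R 0 χ - R (k + 1) χ := by
      rw [Dop_sum, ← Finset.sum_range_sub' (fun l => R l χ), Finset.sum_sub_distrib]
      rfl
    rw [e]
    refine PosDef.of_dotProduct_mulVec_pos ((hherm _ _).sub (hherm _ _)) fun v hv => ?_
    rw [star_trivial, sub_mulVec, dotProduct_sub, hR0]
    have h1 := hle (k + 1) χ hχ v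
    have := hvpos v hv
    nlinarith

/-- equivalence of (i) mean square stability of `Σ_K`, (ii) mean square
stability of `Σ̄_K`, and (iii) existence of positive definite `Q_χ` with
`Q_χ - D̄_χ(A_K Q A_Kᵀ) > 0` for all `χ ∈ 𝔛`. -/
theorem mss_characterization
    {NN MM T n m q : ℕ} [NeZero NN] [NeZero MM] [NeZero T]
    [NeZero n] [NeZero m] [NeZero q]
    (P : Matrix (Fin NN) (Fin NN) ℝ) (Qm : Matrix (Fin MM) (Fin MM) ℝ)
    (hP0 : ∀ i j, 0 ≤ P i j) (hP1 : ∀ i, ∑ j, P i j = 1)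
    (hQ0 : ∀ i j, 0 ≤ Qm i j) (hQ1 : ∀ i, ∑ j, Qm i j = 1)
    (f : Fin MM → Bool)
    (A : Fin NN → Matrix (Fin n) (Fin n) ℝ) (B : Fin NN → Matrix (Fin n) (Fin m) ℝ)
    (E : Fin NN → Matrix (Fin n) (Fin q) ℝ)
    (K : Fin NN → Fin T → Matrix (Fin m) (Fin n) ℝ) :
    (MeanSquareStable P Qm f A B E K ↔ MeanSquareStableBar P Qm f A B E K)
    ∧ (MeanSquareStableBar P Qm f A B E K ↔
        ∃ Qmat : XT NN MM T → Matrix (Fin n) (Fin n) ℝ,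
          (∀ χ, inX f χ → (Qmat χ).PosDef) ∧
          ∀ χ, inX f χ →
            (Qmat χ - Dop P Qm f
              (fun χ' => AKmat A B K χ' * Qmat χ' * (AKmat A B K χ')ᵀ) χ).PosDef) := by
  have h21 : MeanSquareStableBar P Qm f A B E K → MeanSquareStable P Qm f A B E K := by
    rintro ⟨c, hc, lam, h0, h1, h⟩
    refine ⟨c, hc, lam, h0, h1, ?_⟩
    intro S τ₀ _ σ₀ r₀ s₀ hae x0 k
    have hprob := S.prob
    obtain ⟨ω0, hω0⟩ := hae.exists
    refine h (thetaOf S f τ₀ σ₀) (rbarProc S.r S.s f τ₀ σ₀ 0 ω0)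
      (rbar_inX _ _ _ _ _ _ _) ?_ x0 k
    refine hae.mono fun ω hω => ?_
    refine rbar_congr _ _ _ _ _ _ _ _ (fun l hl => ?_) (fun l hl => ?_)
    · obtain rfl : l = 0 := by omega
      rw [hω.1, hω0.1]
    · obtain rfl : l = 0 := by omega
      rw [hω.2, hω0.2]
  have h13 : MeanSquareStable P Qm f A B E K →
      ∃ Qmat : XT NN MM T → Matrix (Fin n) (Fin n) ℝ,
          (∀ χ, inX f χ → (Qmat χ).PosDef) ∧
          ∀ χ, inX f χ →
            (Qmat χ - Dop P Qm f
              (fun χ' => AKmat A B K χ' * Qmat χ' * (AKmat A B K χ')ᵀ) χ).PosDef := by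
    rintro ⟨c, hc, lam, h0, h1, h⟩
    refine lyap_of_bounds P Qm f A B E K c lam hc h0 h1 ?_
    rintro ⟨α, β, γ, δ⟩ hχ
    obtain ⟨S, hS⟩ := exists_real P Qm hP0 hP1 hQ0 hQ1 α β
    have hstart : ∀ ω : S.Ω, rbarProc S.r S.s f (-(δ.1 : ℤ)) γ 0 ω = (α, β, γ, δ) := by
      intro ω
      cases hf : f β with
      | true =>
        rw [rbar_of_true _ _ _ _ _ _ _ (by rw [(hS ω).2, hf]), (hS ω).1, (hS ω).2]
        obtain ⟨e1, e2⟩ := hχ hf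
        dsimp only at e1 e2
        rw [e1, e2]
      | false =>
        rw [rbar_zero_false _ _ _ _ _ _ (by rw [(hS ω).2, hf]), (hS ω).1, (hS ω).2]
        refine Prod.ext rfl (Prod.ext rfl (Prod.ext rfl (Fin.ext ?_)))
        show ((- -(δ.1 : ℤ)) % (T : ℤ)).toNat = δ.1
        have hδ := δ.2
        rw [neg_neg, Int.emod_eq_of_lt (by omega) (by omega)]
        omega
    refine ⟨thetaOf S f (-(δ.1 : ℤ)) γ, Filter.Eventually.of_forall hstart, ?_⟩
    · intro x0 k
      exact h S (-(δ.1 : ℤ)) (by omega) γ α β (Filter.Eventually.of_forall hS) x0 k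
  have h32 : (∃ Qmat : XT NN MM T → Matrix (Fin n) (Fin n) ℝ,
          (∀ χ, inX f χ → (Qmat χ).PosDef) ∧
          ∀ χ, inX f χ →
            (Qmat χ - Dop P Qm f
              (fun χ' => AKmat A B K χ' * Qmat χ' * (AKmat A B K χ')ᵀ) χ).PosDef) →
      MeanSquareStableBar P Qm f A B E K := by
    rintro ⟨Qmat, h1, h2⟩
    exact bar_of_lyap P Qm hP0 hQ0 f A B E K Qmat h1 h2
  exact ⟨⟨fun h => h32 (h13 h), h21⟩, ⟨fun h => h13 (h21 h), h32⟩⟩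

end
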